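/- det R = (−1)^{(n−1)s} · 2^{(n−3)s} · det(τᵀ R τ) / χ(G), where χ(G) = det L(1,1) is the cofactor of any block of L, with L(1,1) the matrix obtained from L by deleting its first block row and first block column (rows and columns 1,…,s). -/

import Mathlib

open Matrix Finset
open scoped Kronecker

noncomputable section

/-- The `ns × s` matrix `1 ⊗ Iₛ`, where `1` is the all-ones column vector. -/
def oneKron (n s : ℕ) : Matrix (Fin n × Fin s) (Fin s) ℝ :=
  Matrix.of fun p b => if p.2 = b then 1 else 0

/-- The `ns × ns` matrix `J ⊗ Iₛ`, where `J` is the all-ones matrix. -/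
def JKron (n s : ℕ) : Matrix (Fin n × Fin s) (Fin n × Fin s) ℝ :=
  (Matrix.of fun _ _ : Fin n => (1 : ℝ)) ⊗ₖ (1 : Matrix (Fin s) (Fin s) ℝ)

/-- The Laplacian matrix of a graph whose edges `{i,j}` are weighted by
positive definite `s × s` matrices `W i j`: the `(i,i)` block is
`Σ_{j ∼ i} (W i j)⁻¹`, the `(i,j)` block for `i ≠ j` is `-(W i j)⁻¹` if `i ∼ j`
and `0` otherwise. -/
def lap {n s : ℕ} (G : SimpleGraph (Fin n)) [DecidableRel G.Adj]
    (W : Fin n → Fin n → Matrix (Fin s) (Fin s) ℝ) :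
    Matrix (Fin n × Fin s) (Fin n × Fin s) ℝ :=
  Matrix.of fun p q =>
    if p.1 = q.1 then (∑ k ∈ univ.filter (fun k => G.Adj p.1 k), (W p.1 k)⁻¹) p.2 q.2
    else if G.Adj p.1 q.1 then -((W p.1 q.1)⁻¹ p.2 q.2) else 0

/-- The four Penrose conditions: `Adag` is a Moore–Penrose inverse of `A`. -/
def IsMoorePenrose {m : Type*} [Fintype m] (A Adag : Matrix m m ℝ) : Prop :=
  A * Adag * A = A ∧ Adag * A * Adag = Adag ∧ (A * Adag)ᵀ = A * Adag ∧ (Adag * A)ᵀ = Adag * A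

/-- The `s × s` block of an `ns × ns` matrix in block position `(i, j)`. -/
def blk {n s : ℕ} (A : Matrix (Fin n × Fin s) (Fin n × Fin s) ℝ) (i j : Fin n) :
    Matrix (Fin s) (Fin s) ℝ :=
  Matrix.of fun a b => A (i, a) (j, b)

/-- The resistance matrix built from a Moore–Penrose inverse `Ldag` of the Laplacian:
its `(i,j)` block is `K_{ii} + K_{jj} - 2 K_{ij}`, where `K_{ij}` are the blocks of `Ldag`. -/
def resist {n s : ℕ} (Ldag : Matrix (Fin n × Fin s) (Fin n × Fin s) ℝ) :
    Matrix (Fin n × Fin s) (Fin n × Fin s) ℝ :=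
  Matrix.of fun p q =>
    Ldag (p.1, p.2) (p.1, q.2) + Ldag (q.1, p.2) (q.1, q.2) - 2 * Ldag p q

/-- The `ns × s` matrix `τ`, whose `i`-th block is `2 Iₛ - Σ_{j ∼ i} (W i j)⁻¹ R_{ji}`. -/
def tauMat {n s : ℕ} (G : SimpleGraph (Fin n)) [DecidableRel G.Adj]
    (W : Fin n → Fin n → Matrix (Fin s) (Fin s) ℝ)
    (R : Matrix (Fin n × Fin s) (Fin n × Fin s) ℝ) :
    Matrix (Fin n × Fin s) (Fin s) ℝ :=
  Matrix.of fun p b =>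
    ((2 : ℝ) • (1 : Matrix (Fin s) (Fin s) ℝ) -
      ∑ j ∈ univ.filter (fun j => G.Adj p.1 j), (W p.1 j)⁻¹ * blk R j p.1) p.2 b

/-- The block diagonal matrix `X̄` with the same diagonal blocks as `X`. -/
def bdiag {n s : ℕ} (X : Matrix (Fin n × Fin s) (Fin n × Fin s) ℝ) :
    Matrix (Fin n × Fin s) (Fin n × Fin s) ℝ :=
  Matrix.of fun p q => if p.1 = q.1 then X (p.1, p.2) (p.1, q.2) else 0

/-!
Border `R` by `U = 1 ⊗ Iₛ`.  The relation `L R = τ Uᵀ - 2 I` gives a matrix version of Fiedler's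
identity,
`[[R, U], [Uᵀ, 0]]⁻¹ = [[-L/2, τ/2], [τᵀ/2, -τᵀ R τ/4]]`.
Jacobi's identity for complementary minors, applied to it twice, compares `det R` with
`det (τᵀ R τ)`, and `χ(G)` with the minor of the bordered matrix on one vertex block and the border.
That minor is `det [[0, I], [I, 0]] = (-1)ˢ`, because the diagonal blocks of `R` vanish.
-/

section Determinants

variable {α m k l : Type*} [CommRing α] [Fintype m] [Fintype k] [Fintype l]
  [DecidableEq m] [DecidableEq k] [DecidableEq l]

theorem det_toBlocks₁₁_eq_det_mul_det_toBlocks₂₂ {A B : Matrix (k ⊕ l) (k ⊕ l) α}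
    (h : A * B = 1) : A.toBlocks₁₁.det = A.det * B.toBlocks₂₂.det := by
  rw [← fromBlocks_toBlocks A, ← fromBlocks_toBlocks B, fromBlocks_multiply, ← fromBlocks_one,
    fromBlocks_inj] at h
  obtain ⟨-, h₁₂, -, h₂₂⟩ := h
  have hmul : A * fromBlocks 1 B.toBlocks₁₂ 0 B.toBlocks₂₂ =
      fromBlocks A.toBlocks₁₁ 0 A.toBlocks₂₁ 1 := by
    conv_lhs => rw [← fromBlocks_toBlocks A]
    simp [fromBlocks_multiply, h₁₂, h₂₂]
  simpa using (congrArg det hmul).symm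

theorem det_submatrix_inl_eq_det_mul_det_submatrix_inr {A B : Matrix m m α} (h : A * B = 1)
    (e : k ⊕ l ≃ m) :
    (A.submatrix (e ∘ Sum.inl) (e ∘ Sum.inl)).det =
      A.det * (B.submatrix (e ∘ Sum.inr) (e ∘ Sum.inr)).det := by
  have hmul : A.submatrix e e * B.submatrix e e = 1 := by
    rw [submatrix_mul_equiv, h, submatrix_one_equiv]
  rw [← det_submatrix_equiv_self e A]
  exact det_toBlocks₁₁_eq_det_mul_det_toBlocks₂₂ hmul

theorem det_fromBlocks_zero_one_one_zero :
    (fromBlocks 0 1 1 0 : Matrix (k ⊕ k) (k ⊕ k) α).det = (-1) ^ Fintype.card k := by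
  have hmul : (fromBlocks 0 1 1 0 : Matrix (k ⊕ k) (k ⊕ k) α) * fromBlocks 1 0 1 1 =
      fromBlocks 1 1 1 0 := by
    simp [fromBlocks_multiply]
  simpa [det_fromBlocks_one₁₁, det_neg] using congrArg det hmul

end Determinants

section Kernel

variable {α l m k p : Type*} [CommSemiring α] [Fintype m] [Fintype k]

theorem exists_eq_mul_of_mul_eq_zero {A : Matrix p m α} {U : Matrix m k α}
    (hker : ∀ v, A *ᵥ v = 0 → ∃ c, v = U *ᵥ c) {B : Matrix m l α} (hAB : A * B = 0) :
    ∃ C : Matrix k l α, B = U * C := by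
  have hcol (j : l) : ∃ c, B.col j = U *ᵥ c :=
    hker _ (funext fun i => congrFun (congrFun hAB i) j)
  choose c hc using hcol
  exact ⟨of fun a j => c j a, Matrix.ext fun i j => congrFun (hc j) i⟩

theorem mul_eq_zero_of_forall_mulVec_eq_zero {A : Matrix p m α} {U : Matrix m k α}
    (hker : ∀ c, A *ᵥ (U *ᵥ c) = 0) : A * U = 0 := by
  classical
  exact ext_of_mulVec_single fun j => by rw [← mulVec_mulVec, hker, zero_mulVec]

end Kernel

theorem smul_mul_eq_mul_of_mul_eq_sub {α m k : Type*} [CommRing α] [Fintype m] [Fintype k]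
    [DecidableEq m] [DecidableEq k] {L R : Matrix m m α} {U τ : Matrix m k α} {r : α}
    (hker : ∀ v, L *ᵥ v = 0 → ∃ c, v = U *ᵥ c) (hLR : L * R = τ * Uᵀ - r • 1)
    (hUτ : Uᵀ * τ = r • 1) : r • (R * τ) = U * (τᵀ * R * τ) := by
  have hLRτ : L * (R * τ) = 0 := by
    rw [← Matrix.mul_assoc, hLR, Matrix.sub_mul, Matrix.mul_assoc, hUτ]
    simp
  obtain ⟨C, hC⟩ := exists_eq_mul_of_mul_eq_zero hker hLRτ
  have hτU : τᵀ * U = r • 1 := by simpa using congrArg (·ᵀ) hUτ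
  rw [Matrix.mul_assoc τᵀ, hC, ← Matrix.mul_assoc τᵀ, hτU]
  simp

section Bordered

variable {𝕜 m k : Type*} [Field 𝕜] [Fintype m] [Fintype k]

/-- The matrix `R` bordered by the columns of `U` and the rows of `Uᵀ`, with a zero corner. For the
distance matrix of a point set and `U` the all-ones column this is the Cayley–Menger matrix. -/
def bordered (R : Matrix m m 𝕜) (U : Matrix m k 𝕜) : Matrix (m ⊕ k) (m ⊕ k) 𝕜 :=
  fromBlocks R U Uᵀ 0

/-- The matrix which Fiedler's identity provides as the inverse of `bordered R U`: the Laplacian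
`L` scaled by `-1/2`, bordered by `τ/2`. -/
def fiedlerInverse (L R : Matrix m m 𝕜) (τ : Matrix m k 𝕜) : Matrix (m ⊕ k) (m ⊕ k) 𝕜 :=
  fromBlocks ((-1 / 2 : 𝕜) • L) ((1 / 2 : 𝕜) • τ) ((1 / 2 : 𝕜) • τᵀ) ((-1 / 4 : 𝕜) • (τᵀ * R * τ))

theorem bordered_mul_fiedlerInverse [DecidableEq m] [DecidableEq k] {L R : Matrix m m 𝕜}
    {U τ : Matrix m k 𝕜} (h2 : (2 : 𝕜) ≠ 0) (hRL : R * L = U * τᵀ - (2 : 𝕜) • 1)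
    (hUL : Uᵀ * L = 0) (hUτ : Uᵀ * τ = (2 : 𝕜) • 1)
    (hRτ : (2 : 𝕜) • (R * τ) = U * (τᵀ * R * τ)) :
    bordered R U * fiedlerInverse L R τ = 1 := by
  have h4 : (4 : 𝕜) ≠ 0 := by
    rw [show (4 : 𝕜) = 2 * 2 by norm_num]
    exact mul_ne_zero h2 h2
  rw [bordered, fiedlerInverse, fromBlocks_multiply, ← fromBlocks_one]
  simp only [Matrix.mul_smul, hRL, hUL, hUτ, ← hRτ, Matrix.zero_mul]
  congr 1 <;> match_scalars <;> field_simp <;> norm_num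

end Bordered

namespace IsMoorePenrose

variable {m k : Type*} [Fintype m] [Fintype k] {A B C : Matrix m m ℝ}

theorem transpose (h : IsMoorePenrose A B) : IsMoorePenrose Aᵀ Bᵀ := by
  obtain ⟨hABA, hBAB, hAB, hBA⟩ := h
  refine ⟨?_, ?_, ?_, ?_⟩
  · rw [← transpose_mul, ← transpose_mul, ← Matrix.mul_assoc, hABA]
  · rw [← transpose_mul, ← transpose_mul, ← Matrix.mul_assoc, hBAB]
  · rw [← transpose_mul, hBA, hBA]
  · rw [← transpose_mul, hAB, hAB]

theorem mul_eq_mul (hB : IsMoorePenrose A B) (hC : IsMoorePenrose A C) : A * B = A * C := by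
  obtain ⟨hABA, -, hAB, -⟩ := hB
  obtain ⟨hACA, -, hAC, -⟩ := hC
  calc A * B = (A * C * (A * B))ᵀ := by rw [← Matrix.mul_assoc, hACA, hAB]
    _ = A * B * (A * C) := by rw [transpose_mul, hAB, hAC]
    _ = A * C := by rw [← Matrix.mul_assoc, hABA]

theorem unique (hB : IsMoorePenrose A B) (hC : IsMoorePenrose A C) : B = C := by
  have hAB : A * B = A * C := hB.mul_eq_mul hC
  have hBA : B * A = C * A := by
    simpa only [← transpose_mul, transpose_inj] using hB.transpose.mul_eq_mul hC.transpose
  calc B = B * A * B := hB.2.1.symm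
    _ = C * A * C := by rw [hBA, Matrix.mul_assoc, hAB, ← Matrix.mul_assoc]
    _ = C := hC.2.1

theorem isSymm (h : IsMoorePenrose A B) (hA : A.IsSymm) : B.IsSymm :=
  unique (hA.eq ▸ h.transpose) h

theorem mul_eq_one_sub [DecidableEq m] [DecidableEq k] (h : IsMoorePenrose A B) (hA : A.IsSymm)
    {U : Matrix m k ℝ} (hker : ∀ v, A *ᵥ v = 0 ↔ ∃ c, v = U *ᵥ c) {r : ℝ} (hr : r ≠ 0)
    (hU : Uᵀ * U = r • 1) : A * B = 1 - r⁻¹ • (U * Uᵀ) := by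
  obtain ⟨hABA, -, hAB, -⟩ := h
  have hUA : Uᵀ * A = 0 := by
    rw [← transpose_inj, transpose_mul, hA.eq, transpose_transpose, transpose_zero]
    exact mul_eq_zero_of_forall_mulVec_eq_zero fun c => (hker _).2 ⟨c, rfl⟩
  have hAAB : A * (1 - A * B) = 0 := by
    have hAAB' : A * (A * B) = A := by
      rw [← transpose_inj, transpose_mul, hAB, hA.eq, hABA]
    rw [Matrix.mul_sub, Matrix.mul_one, hAAB', sub_self]
  obtain ⟨C, hC⟩ := exists_eq_mul_of_mul_eq_zero (fun v => (hker v).1) hAAB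
  have hUC : Uᵀ = r • C := by
    simpa [Matrix.mul_sub, ← Matrix.mul_assoc, hUA, hU] using congrArg (Uᵀ * ·) hC
  rw [hUC, Matrix.mul_smul, ← hC, smul_smul, inv_mul_cancel₀ hr, one_smul, sub_sub_cancel]

end IsMoorePenrose

section Blocks

variable {n s : ℕ} {m : Type*}

theorem mul_transpose_oneKron_apply (Y : Matrix m (Fin s) ℝ) (p : m) (q : Fin n × Fin s) :
    (Y * (oneKron n s)ᵀ) p q = Y p q.2 := by
  simp [Matrix.mul_apply, oneKron]

theorem oneKron_mul_apply (Y : Matrix (Fin s) m ℝ) (p : Fin n × Fin s) (q : m) :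
    (oneKron n s * Y) p q = Y p.2 q := by
  simp [Matrix.mul_apply, oneKron]

theorem transpose_oneKron_mul_oneKron : (oneKron n s)ᵀ * oneKron n s = (n : ℝ) • 1 := by
  ext a b
  by_cases hab : a = b <;>
    simp [Matrix.mul_apply, oneKron, Fintype.sum_prod_type, hab, Ne.symm]

/-- The `ns × s` matrix obtained by stacking the diagonal blocks of `A` vertically. -/
def diagBlocks (A : Matrix (Fin n × Fin s) (Fin n × Fin s) ℝ) : Matrix (Fin n × Fin s) (Fin s) ℝ :=
  of fun p b => A p (p.1, b)

theorem diagBlocks_mul_transpose_oneKron (Y : Matrix (Fin n × Fin s) (Fin s) ℝ) :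
    diagBlocks (Y * (oneKron n s)ᵀ) = Y :=
  Matrix.ext fun _ _ => mul_transpose_oneKron_apply Y _ _

theorem blk_mul (A B : Matrix (Fin n × Fin s) (Fin n × Fin s) ℝ) (i j : Fin n) :
    blk (A * B) i j = ∑ k, blk A i k * blk B k j := by
  ext a b
  simp [blk, Matrix.mul_apply, Matrix.sum_apply, Fintype.sum_prod_type]

/-- The resistance curvature `τ`, for a Laplacian which need not come from a graph: if the diagonal
blocks of `R` vanish, then `τ_i = 2 I - ∑_{j ∼ i} W_{ij}⁻¹ R_{ji}` is `2 I + (L R)_{ii}`. -/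
def curvature (L R : Matrix (Fin n × Fin s) (Fin n × Fin s) ℝ) : Matrix (Fin n × Fin s) (Fin s) ℝ :=
  (2 : ℝ) • oneKron n s + diagBlocks (L * R)

theorem curvature_eq_of_mul_eq {L R : Matrix (Fin n × Fin s) (Fin n × Fin s) ℝ}
    {Y : Matrix (Fin n × Fin s) (Fin s) ℝ} (h : L * R = Y * (oneKron n s)ᵀ - (2 : ℝ) • 1) :
    curvature L R = Y := by
  have hone : diagBlocks (1 : Matrix (Fin n × Fin s) (Fin n × Fin s) ℝ) = oneKron n s := by
    ext p b
    simp [diagBlocks, oneKron, Matrix.one_apply, Prod.ext_iff]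
  have hsub : diagBlocks (Y * (oneKron n s)ᵀ - (2 : ℝ) • 1) =
      diagBlocks (Y * (oneKron n s)ᵀ) - (2 : ℝ) • diagBlocks 1 := rfl
  rw [curvature, h, hsub, diagBlocks_mul_transpose_oneKron, hone, add_sub_cancel]

theorem blk_lap_mul_blk (G : SimpleGraph (Fin n)) [DecidableRel G.Adj]
    (W : Fin n → Fin n → Matrix (Fin s) (Fin s) ℝ)
    {R : Matrix (Fin n × Fin s) (Fin n × Fin s) ℝ} {i : Fin n} (hR : blk R i i = 0) (j : Fin n) :
    blk (lap G W) i j * blk R j i = if G.Adj i j then -((W i j)⁻¹ * blk R j i) else 0 := by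
  obtain rfl | hij := eq_or_ne i j
  · simp [hR]
  · have hblk : blk (lap G W) i j = if G.Adj i j then -(W i j)⁻¹ else 0 := by
      ext a b
      by_cases hadj : G.Adj i j <;> simp [blk, lap, hij, hadj]
    rw [hblk, ite_mul, Matrix.neg_mul, Matrix.zero_mul]

theorem tauMat_eq_curvature (G : SimpleGraph (Fin n)) [DecidableRel G.Adj]
    (W : Fin n → Fin n → Matrix (Fin s) (Fin s) ℝ)
    {R : Matrix (Fin n × Fin s) (Fin n × Fin s) ℝ} (hR : ∀ i, blk R i i = 0) :
    tauMat G W R = curvature (lap G W) R := by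
  ext ⟨i, a⟩ b
  have hsum : blk (lap G W * R) i i = -∑ j with G.Adj i j, (W i j)⁻¹ * blk R j i := by
    simp only [blk_mul, blk_lap_mul_blk G W (hR i), sum_ite, sum_const_zero, add_zero,
      sum_neg_distrib]
  have hentry : (lap G W * R) (i, a) (i, b) =
      -(∑ j with G.Adj i j, (W i j)⁻¹ * blk R j i) a b := congrFun (congrFun hsum a) b
  simp [tauMat, curvature, diagBlocks, hentry, oneKron, Matrix.one_apply, sub_eq_add_neg]

end Blocks

section Resistance

variable {n s : ℕ} {L K : Matrix (Fin n × Fin s) (Fin n × Fin s) ℝ}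

theorem blk_resist_self (K : Matrix (Fin n × Fin s) (Fin n × Fin s) ℝ) (i : Fin n) :
    blk (resist K) i i = 0 := by
  ext a b
  simp only [blk, resist, of_apply, Matrix.zero_apply]
  ring

theorem resist_eq (hK : K.IsSymm) :
    resist K = diagBlocks K * (oneKron n s)ᵀ + oneKron n s * (diagBlocks K)ᵀ - (2 : ℝ) • K := by
  ext p q
  simp [resist, mul_transpose_oneKron_apply, oneKron_mul_apply, diagBlocks, hK.apply q (q.1, p.2)]

theorem isSymm_resist (hK : K.IsSymm) : (resist K).IsSymm := by
  rw [IsSymm, resist_eq hK]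
  simp [hK.eq, add_comm]

theorem mul_resist (hK : K.IsSymm) (hLU : L * oneKron n s = 0)
    (hLK : L * K = 1 - (n : ℝ)⁻¹ • (oneKron n s * (oneKron n s)ᵀ)) :
    L * resist K =
      (L * diagBlocks K + (2 * (n : ℝ)⁻¹) • oneKron n s) * (oneKron n s)ᵀ - (2 : ℝ) • 1 := by
  rw [resist_eq hK, Matrix.mul_sub, Matrix.mul_add, ← Matrix.mul_assoc, ← Matrix.mul_assoc, hLU,
    Matrix.mul_smul, hLK, Matrix.add_mul, Matrix.smul_mul, Matrix.zero_mul]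
  module

theorem bordered_resist_mul_fiedlerInverse (hn : n ≠ 0) (hL : L.IsSymm)
    (hker : ∀ v, L *ᵥ v = 0 ↔ ∃ c, v = oneKron n s *ᵥ c) (hK : IsMoorePenrose L K) :
    bordered (resist K) (oneKron n s) *
      fiedlerInverse L (resist K) (curvature L (resist K)) = 1 := by
  have hn' : (n : ℝ) ≠ 0 := Nat.cast_ne_zero.2 hn
  have hUU : (oneKron n s)ᵀ * oneKron n s = (n : ℝ) • 1 := transpose_oneKron_mul_oneKron
  have hLU : L * oneKron n s = 0 :=
    mul_eq_zero_of_forall_mulVec_eq_zero fun c => (hker _).2 ⟨c, rfl⟩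
  have hUL : (oneKron n s)ᵀ * L = 0 := by
    rw [← transpose_inj, transpose_mul, hL.eq, transpose_transpose, hLU, transpose_zero]
  have hKsymm : K.IsSymm := hK.isSymm hL
  have hLR := mul_resist hKsymm hLU (hK.mul_eq_one_sub hL hker hn' hUU)
  rw [curvature_eq_of_mul_eq hLR]
  have hUτ : (oneKron n s)ᵀ * (L * diagBlocks K + (2 * (n : ℝ)⁻¹) • oneKron n s) =
      (2 : ℝ) • 1 := by
    rw [Matrix.mul_add, ← Matrix.mul_assoc, hUL, Matrix.zero_mul, zero_add, Matrix.mul_smul, hUU,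
      smul_smul, mul_assoc, inv_mul_cancel₀ hn', mul_one]
  refine bordered_mul_fiedlerInverse two_ne_zero ?_ hUL hUτ
    (smul_mul_eq_mul_of_mul_eq_sub (fun v => (hker v).1) hLR hUτ)
  simpa [(isSymm_resist hKsymm).eq, hL.eq] using congrArg (·ᵀ) hLR

end Resistance

section Cofactor

/-- Splits the block indices into those off `z` and the block at `z`. -/
def splitBlock {ι : Type*} [DecidableEq ι] (κ : Type*) (z : ι) :
    ({k // k ≠ z} × κ) ⊕ κ ≃ ι × κ :=
  (Equiv.sumCongr (.refl _) (Equiv.punitProd κ).symm).trans <|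
    (Equiv.sumProdDistrib _ _ κ).symm.trans <|
      Equiv.prodCongr
        ((Equiv.optionEquivSumPUnit.{0} _).symm.trans (Equiv.optionSubtypeNe z)) (.refl κ)

variable {n s : ℕ} {z : Fin n} {L R : Matrix (Fin n × Fin s) (Fin n × Fin s) ℝ}
  {τ : Matrix (Fin n × Fin s) (Fin s) ℝ}

/-- The matrix obtained from `L` by deleting the `z`-th block row and block column. -/
def deleteBlock (L : Matrix (Fin n × Fin s) (Fin n × Fin s) ℝ) (z : Fin n) :
    Matrix ({k // k ≠ z} × Fin s) ({k // k ≠ z} × Fin s) ℝ :=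
  L.submatrix (fun p => ((p.1 : Fin n), p.2)) (fun p => ((p.1 : Fin n), p.2))

theorem det_deleteBlock_eq_of_bordered_mul (hR : blk R z z = 0)
    (h : bordered R (oneKron n s) * fiedlerInverse L R τ = 1) :
    (-1 / 2 : ℝ) ^ ((n - 1) * s) * (deleteBlock L z).det =
      (fiedlerInverse L R τ).det * (-1) ^ s := by
  let e : ({k // k ≠ z} × Fin s) ⊕ (Fin s ⊕ Fin s) ≃ (Fin n × Fin s) ⊕ Fin s :=
    (Equiv.sumAssoc _ _ _).symm.trans (Equiv.sumCongr (splitBlock (Fin s) z) (.refl _))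
  have hoff : (fiedlerInverse L R τ).submatrix (e ∘ Sum.inl) (e ∘ Sum.inl) =
      (-1 / 2 : ℝ) • deleteBlock L z := rfl
  have hat : (bordered R (oneKron n s)).submatrix (e ∘ Sum.inr) (e ∘ Sum.inr) =
      fromBlocks 0 1 1 0 := by
    have hU : (oneKron n s).submatrix (fun a => (z, a)) id = 1 := by
      ext a b
      simp [oneKron, Matrix.one_apply]
    calc (bordered R (oneKron n s)).submatrix (e ∘ Sum.inr) (e ∘ Sum.inr)
        = fromBlocks (blk R z z) ((oneKron n s).submatrix (fun a => (z, a)) id)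
            ((oneKron n s).submatrix (fun a => (z, a)) id)ᵀ 0 := by
          ext (a | a) (b | b) <;> rfl
      _ = fromBlocks 0 1 1 0 := by rw [hR, hU, transpose_one]
  have hjacobi := det_submatrix_inl_eq_det_mul_det_submatrix_inr (mul_eq_one_comm.1 h) e
  rw [hoff, hat, det_smul, det_fromBlocks_zero_one_one_zero] at hjacobi
  simpa using hjacobi

theorem det_deleteBlock_ne_zero_of_bordered_mul
    (hR : blk R z z = 0) (h : bordered R (oneKron n s) * fiedlerInverse L R τ = 1) :
    (deleteBlock L z).det ≠ 0 := by
  have hdet : (fiedlerInverse L R τ).det ≠ 0 := det_ne_zero_of_left_inverse h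
  refine right_ne_zero_of_mul (a := (-1 / 2 : ℝ) ^ ((n - 1) * s)) ?_
  rw [det_deleteBlock_eq_of_bordered_mul hR h]
  exact mul_ne_zero hdet (pow_ne_zero _ (by norm_num))

theorem det_mul_det_deleteBlock_of_bordered_mul
    (hR : blk R z z = 0) (h : bordered R (oneKron n s) * fiedlerInverse L R τ = 1) :
    R.det * (deleteBlock L z).det = (-2) ^ ((n - 1) * s) * (1 / 4) ^ s * (τᵀ * R * τ).det := by
  set B := bordered R (oneKron n s)
  set D := fiedlerInverse L R τ
  have hBD : B.det * D.det = 1 := by rw [← det_mul, h, det_one]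
  have hRdet : R.det = B.det * ((-1 / 4) ^ s * (τᵀ * R * τ).det) := by
    simpa [B, D, bordered, fiedlerInverse] using det_toBlocks₁₁_eq_det_mul_det_toBlocks₂₂ h
  have hLdet : (deleteBlock L z).det = (-2) ^ ((n - 1) * s) * (D.det * (-1) ^ s) := by
    rw [← det_deleteBlock_eq_of_bordered_mul hR h, ← mul_assoc, ← mul_pow]
    norm_num
  calc R.det * (deleteBlock L z).det
      = (-2) ^ ((n - 1) * s) * ((-1 / 4) ^ s * (-1) ^ s) * (τᵀ * R * τ).det *
          (B.det * D.det) := by rw [hRdet, hLdet]; ring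
    _ = (-2) ^ ((n - 1) * s) * (1 / 4) ^ s * (τᵀ * R * τ).det := by
      rw [hBD, mul_one, ← mul_pow]; norm_num

end Cofactor

theorem neg_one_zpow_mul_two_zpow {n : ℕ} (hn : n ≠ 0) (s : ℕ) :
    (-1 : ℝ) ^ (((n : ℤ) - 1) * (s : ℤ)) * (2 : ℝ) ^ (((n : ℤ) - 3) * (s : ℤ)) =
      (-2) ^ ((n - 1) * s) * (1 / 4) ^ s := by
  obtain ⟨t, rfl⟩ := Nat.exists_eq_succ_of_ne_zero hn
  have h₁ : ((t.succ : ℤ) - 1) * s = (t * s : ℕ) := by push_cast; ring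
  have h₃ : ((t.succ : ℤ) - 3) * s = (t * s : ℕ) - (2 * s : ℕ) := by push_cast; ring
  rw [h₁, h₃, zpow_sub₀ two_ne_zero]
  simp only [zpow_natCast, Nat.succ_sub_one, neg_pow (2 : ℝ), pow_mul (2 : ℝ) 2, one_div, inv_pow]
  norm_num [div_eq_mul_inv, mul_assoc]

theorem det_resist_general {n s : ℕ} {L K : Matrix (Fin n × Fin s) (Fin n × Fin s) ℝ}
    (hL : L.IsSymm) (hker : ∀ v, L *ᵥ v = 0 ↔ ∃ c, v = oneKron n s *ᵥ c)
    (hK : IsMoorePenrose L K) (z : Fin n) :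
    (resist K).det = (-1 : ℝ) ^ (((n : ℤ) - 1) * (s : ℤ)) * (2 : ℝ) ^ (((n : ℤ) - 3) * (s : ℤ)) *
      ((curvature L (resist K))ᵀ * resist K * curvature L (resist K)).det /
        (deleteBlock L z).det := by
  have hn : n ≠ 0 := z.pos.ne'
  have hinv := bordered_resist_mul_fiedlerInverse hn hL hker hK
  rw [neg_one_zpow_mul_two_zpow hn,
    eq_div_iff (det_deleteBlock_ne_zero_of_bordered_mul (blk_resist_self K z) hinv)]
  exact det_mul_det_deleteBlock_of_bordered_mul (blk_resist_self K z) hinv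

/-- `det R = (-1)^{(n-1)s} 2^{(n-3)s} det(τᵀ R τ) / χ(G)`, where `χ(G)` is the
determinant of the matrix obtained from `L` by deleting its first block row and
first block column. -/
theorem det_resist
    (n s : ℕ) (hn : 2 ≤ n) (hs : 1 ≤ s)
    (G : SimpleGraph (Fin n)) [DecidableRel G.Adj] (hconn : G.Connected)
    (W : Fin n → Fin n → Matrix (Fin s) (Fin s) ℝ)
    (hWsymm : ∀ i j, W i j = W j i)
    (hWpd : ∀ i j, G.Adj i j → (W i j).PosDef)
    (hPSD : (lap G W).PosSemidef)
    (hrank : (lap G W).rank = n * s - s)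
    (hker : ∀ v : Fin n × Fin s → ℝ,
      lap G W *ᵥ v = 0 ↔ ∃ c : Fin s → ℝ, v = oneKron n s *ᵥ c)
    (Ldag : Matrix (Fin n × Fin s) (Fin n × Fin s) ℝ)
    (hMP : IsMoorePenrose (lap G W) Ldag)
    (R : Matrix (Fin n × Fin s) (Fin n × Fin s) ℝ)
    (hR : R = resist Ldag)
    (chi : ℝ)
    (hchi : chi = ((lap G W).submatrix
      (fun p : {k : Fin n // k ≠ (⟨0, by omega⟩ : Fin n)} × Fin s => ((p.1 : Fin n), p.2))
      (fun p : {k : Fin n // k ≠ (⟨0, by omega⟩ : Fin n)} × Fin s => ((p.1 : Fin n), p.2))).det) :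
    R.det = (-1 : ℝ) ^ (((n : ℤ) - 1) * (s : ℤ)) * (2 : ℝ) ^ (((n : ℤ) - 3) * (s : ℤ)) *
      ((tauMat G W R)ᵀ * R * tauMat G W R).det / chi := by
  subst hR hchi
  rw [tauMat_eq_curvature G W (blk_resist_self Ldag)]
  exact det_resist_general (isHermitian_iff_isSymm.1 hPSD.isHermitian) hker hMP _
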